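/- arXiv:math/0511156 — 2 statements merged into one kernel-verified Lean document; each statement's English description precedes it below -/
import Mathlib

section
/- Let N ≥ 3 and let V satisfy condition (V), the decay condition that there exist A, α > 0 with V⁺(x) ≤ A|x|^{-2-α} for all x ∈ ℝ^N, and the condition |x|^{2(N-1)/N} V₂(x) → 0 as x → 0. Then Λ := lim_{R→∞} λ₁(R) is strictly positive. -/
open MeasureTheory Filter Metric Set
open scoped ENNReal NNReal Topology

noncomputable section

/-- Euclidean space `ℝ^N`. -/
abbrev Euc (N : ℕ) := EuclideanSpace ℝ (Fin N)

/-- The Laplace operator on `ℝ^N`: the sum of the second partial derivatives. -/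
def lap (N : ℕ) (u : Euc N → ℝ) (x : Euc N) : ℝ :=
  ∑ i : Fin N,
    fderiv ℝ (fun y => fderiv ℝ u y (EuclideanSpace.single i 1)) x (EuclideanSpace.single i 1)

/-- The principal eigenvalue `λ₁(R)`: the infimum of `∫_{B_R} |∇u|²` over smooth functions
compactly supported in the open ball `B_R` with `∫_{B_R} V u² = 1`. -/
def lam1 (N : ℕ) (V : Euc N → ℝ) (R : ℝ) : ℝ :=
  sInf { t : ℝ | ∃ u : Euc N → ℝ, ContDiff ℝ (⊤ : ℕ∞) u ∧ HasCompactSupport u ∧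
    tsupport u ⊆ ball (0 : Euc N) R ∧
    (∫ x, V x * u x ^ 2) = 1 ∧ t = ∫ x, ‖gradient u x‖ ^ 2 }

/-- `Λ := lim_{R → ∞} λ₁(R)`. -/
def Lam (N : ℕ) (V : Euc N → ℝ) : ℝ := limUnder atTop (lam1 N V)

/-- Condition (V): `V` is a bounded Hölder-continuous function whose positive part
`V⁺ = max(V, 0)` is nontrivial and decomposes as `V₁ + V₂` with `V₁ ∈ L^{N/2}` and
`|x|² V₂(x) → 0` as `|x| → ∞`. -/
def CondV (N : ℕ) (V V₁ V₂ : Euc N → ℝ) : Prop :=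
  (∃ C β : ℝ≥0, 0 < β ∧ β ≤ 1 ∧ HolderWith C β V) ∧
  (∃ C : ℝ, ∀ x, |V x| ≤ C) ∧
  (∃ x, 0 < V x) ∧
  (∀ x, max (V x) 0 = V₁ x + V₂ x) ∧
  MemLp V₁ ((N : ℝ≥0∞) / 2) volume ∧
  Tendsto (fun x : Euc N => ‖x‖ ^ 2 * V₂ x) (cocompact _) (𝓝 0)

/-- The decay condition: `V⁺(x) ≤ A |x|^{-2-α}`. -/
def CondVDecay (N : ℕ) (V : Euc N → ℝ) : Prop :=
  ∃ A α : ℝ, 0 < A ∧ 0 < α ∧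
    ∀ x : Euc N, x ≠ 0 → max (V x) 0 ≤ A * ‖x‖ ^ (-2 - α)

/-- Conditions (f1), (f2), (f3) on the absorption term `f`. -/
def CondF (N : ℕ) (V : Euc N → ℝ) (f : ℝ → ℝ) : Prop :=
  ContDiff ℝ 1 f ∧ (∀ u : ℝ, 0 ≤ u → 0 ≤ f u) ∧
  -- (f1)
  f 0 = 0 ∧ deriv f 0 = 0 ∧
  0 < Filter.liminf (fun u : ℝ => ((deriv f u / u : ℝ) : EReal)) (𝓝[>] (0 : ℝ)) ∧
  -- (f2)
  StrictMonoOn (fun u : ℝ => f u / u) (Ioi 0) ∧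
  -- (f3)
  (∃ L : EReal, Tendsto (fun u : ℝ => ((f u / u : ℝ) : EReal)) atTop (𝓝 L) ∧
    ((⨆ x, |V x| : ℝ) : EReal) < L)

/-- A solution of problem `(P_λ)`: a positive `C²` function solving the logistic equation
and decaying to zero at infinity. -/
structure IsSolution (N : ℕ) (V : Euc N → ℝ) (f : ℝ → ℝ) (lam : ℝ) (u : Euc N → ℝ) : Prop where
  smooth : ContDiff ℝ 2 u
  pos : ∀ x, 0 < u x
  eqn : ∀ x, -lap N u x = lam * (V x * u x - f (u x))
  decay : Tendsto u (cocompact (Euc N)) (𝓝 0)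

/-- The surface integral `∫_{∂B_R} g dσ` over the sphere of radius `R`, written in polar
coordinates with respect to the canonical surface measure on the unit sphere. -/
def sphereInt (N : ℕ) (g : Euc N → ℝ) (R : ℝ) : ℝ :=
  ∫ ω : sphere (0 : Euc N) 1, g (R • (ω : Euc N)) * R ^ (N - 1)
    ∂((volume : Measure (Euc N)).toSphere)

/-!
In dimension `d ≥ 3` let `c = (d - 2) / 2`. Integrating `div (h x) = d h + Dh(x) x` for
`h = u² / (ε + |x|²)` gives `∫ Dh(x) x = -d ∫ h`. In `-c Dh(x) x` the cross term is at most
`c² h + |∇u|²` by Young's inequality and the derivative of the weight contributes at most `2 c h`,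
so `c² ∫ h ≤ ∫ |∇u|²`; this choice of `c` is the one that optimizes the constant. Fatou's lemma as
`ε → 0` yields Hardy's inequality `c² ∫ u² / |x|² ≤ ∫ |∇u|²`.

The decay of `V⁺` at infinity and its boundedness near the origin give `V ≤ A / |x|²`, so a test
function with `∫ V u² = 1` has `∫ |∇u|² ≥ c² / A`. This bound does not depend on `R`.
-/

open Module (finrank)

section FatouLemma

variable {α : Type*} [MeasurableSpace α] {μ : Measure α} {F : ℕ → α → ℝ} {f : α → ℝ} {C : ℝ}

theorem lintegral_ofReal_le_of_tendsto_of_integral_le (hF : ∀ n, Integrable (F n) μ)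
    (hF_nonneg : ∀ n, 0 ≤ F n) (hlim : ∀ᵐ x ∂μ, Tendsto (F · x) atTop (𝓝 (f x)))
    (hC : ∀ n, ∫ x, F n x ∂μ ≤ C) :
    ∫⁻ x, ENNReal.ofReal (f x) ∂μ ≤ ENNReal.ofReal C := by
  have hliminf : ∀ᵐ x ∂μ,
      liminf (fun n ↦ ENNReal.ofReal (F n x)) atTop = ENNReal.ofReal (f x) :=
    hlim.mono fun x hx ↦ (ENNReal.tendsto_ofReal hx).liminf_eq
  calc ∫⁻ x, ENNReal.ofReal (f x) ∂μ
      = ∫⁻ x, liminf (fun n ↦ ENNReal.ofReal (F n x)) atTop ∂μ :=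
        (lintegral_congr_ae hliminf).symm
    _ ≤ liminf (fun n ↦ ∫⁻ x, ENNReal.ofReal (F n x) ∂μ) atTop :=
        lintegral_liminf_le' fun n ↦ (hF n).aemeasurable.ennreal_ofReal
    _ ≤ ENNReal.ofReal C := by
        refine liminf_le_of_frequently_le' (.of_forall fun n ↦ ?_)
        rw [← ofReal_integral_eq_lintegral_ofReal (hF n) (.of_forall (hF_nonneg n))]
        exact ENNReal.ofReal_le_ofReal (hC n)

theorem integrable_and_integral_le_of_tendsto_of_integral_le (hF : ∀ n, Integrable (F n) μ)
    (hF_nonneg : ∀ n, 0 ≤ F n) (hlim : ∀ᵐ x ∂μ, Tendsto (F · x) atTop (𝓝 (f x)))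
    (hC : ∀ n, ∫ x, F n x ∂μ ≤ C) :
    Integrable f μ ∧ ∫ x, f x ∂μ ≤ C := by
  have hC_nonneg : 0 ≤ C := (integral_nonneg (hF_nonneg 0)).trans (hC 0)
  have hf_nonneg : 0 ≤ᵐ[μ] f :=
    hlim.mono fun x hx ↦ ge_of_tendsto' hx fun n ↦ hF_nonneg n x
  have hf_meas : AEStronglyMeasurable f μ :=
    aestronglyMeasurable_of_tendsto_ae atTop (fun n ↦ (hF n).aestronglyMeasurable) hlim
  have hle : ∫⁻ x, ENNReal.ofReal (f x) ∂μ ≤ ENNReal.ofReal C :=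
    lintegral_ofReal_le_of_tendsto_of_integral_le hF hF_nonneg hlim hC
  refine ⟨(lintegral_ofReal_ne_top_iff_integrable hf_meas hf_nonneg).1
    (ne_top_of_le_ne_top ENNReal.ofReal_ne_top hle), ?_⟩
  rw [integral_eq_lintegral_of_nonneg_ae hf_nonneg hf_meas]
  exact ENNReal.toReal_le_of_le_ofReal hC_nonneg hle

end FatouLemma

theorem hasCompactSupport_pow {X M : Type*} [TopologicalSpace X] [MonoidWithZero M]
    {f : X → M} (hf : HasCompactSupport f) {n : ℕ} (hn : n ≠ 0) :
    HasCompactSupport fun x ↦ f x ^ n :=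
  hf.comp_left (zero_pow hn)

section IntegrationByParts

variable {E F : Type*} [NormedAddCommGroup E] [NormedSpace ℝ E] [MeasurableSpace E] [BorelSpace E]
  {μ : Measure E} [NormedAddCommGroup F] [NormedSpace ℝ F] {h : E → F}

theorem integrable_fderiv_apply_self [IsFiniteMeasureOnCompacts μ] (hh : ContDiff ℝ 1 h)
    (hc : HasCompactSupport h) : Integrable (fun x ↦ fderiv ℝ h x x) μ :=
  (hh.continuous_fderiv one_ne_zero |>.clm_apply continuous_id).integrable_of_hasCompactSupport <|
    (hc.fderiv ℝ).mono fun x hx hx0 ↦ hx (by simp [hx0])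

theorem integrable_norm_fderiv_sq [IsFiniteMeasureOnCompacts μ] (hh : ContDiff ℝ 1 h)
    (hc : HasCompactSupport h) : Integrable (fun x ↦ ‖fderiv ℝ h x‖ ^ 2) μ :=
  (hh.continuous_fderiv one_ne_zero |>.norm.pow 2).integrable_of_hasCompactSupport
    (hasCompactSupport_pow (hc.fderiv ℝ).norm two_ne_zero)

theorem integrable_clm_smul_fderiv_apply [IsFiniteMeasureOnCompacts μ] (hh : ContDiff ℝ 1 h)
    (hc : HasCompactSupport h) (l : E →L[ℝ] ℝ) (v : E) :
    Integrable (fun x ↦ l x • fderiv ℝ h x v) μ :=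
  (l.continuous.smul ((hh.continuous_fderiv one_ne_zero).clm_apply
    continuous_const)).integrable_of_hasCompactSupport (hc.fderiv_apply ℝ v).smul_left

variable [FiniteDimensional ℝ E] [μ.IsAddHaarMeasure]

theorem integral_clm_smul_fderiv_apply (hh : ContDiff ℝ 1 h) (hc : HasCompactSupport h)
    (l : E →L[ℝ] ℝ) (v : E) :
    ∫ x, l x • fderiv ℝ h x v ∂μ = -(l v • ∫ x, h x ∂μ) := by
  rw [integral_smul_fderiv_eq_neg_fderiv_smul_of_integrable]
  · simp only [ContinuousLinearMap.fderiv, integral_smul]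
  · simp only [ContinuousLinearMap.fderiv]
    exact (hh.continuous.integrable_of_hasCompactSupport hc).smul (l v)
  · exact integrable_clm_smul_fderiv_apply hh hc l v
  · exact (l.continuous.smul hh.continuous).integrable_of_hasCompactSupport hc.smul_left
  · exact fun x _ ↦ l.differentiableAt
  · exact fun x _ ↦ hh.differentiable one_ne_zero x

theorem integral_fderiv_apply_self (hh : ContDiff ℝ 1 h) (hc : HasCompactSupport h) :
    ∫ x, fderiv ℝ h x x ∂μ = -((finrank ℝ E : ℝ) • ∫ x, h x ∂μ) := by
  let b := Module.finBasis ℝ E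
  let l (i : Fin (finrank ℝ E)) : E →L[ℝ] ℝ := (b.coord i).toContinuousLinearMap
  have hsum (x : E) : fderiv ℝ h x x = ∑ i, l i x • fderiv ℝ h x (b i) := by
    conv_lhs => rw [← b.sum_repr x, map_sum]
    simp only [map_smul]
    simp [l]
  have hl (i : Fin (finrank ℝ E)) : l i (b i) = 1 := by simp [l]
  simp_rw [hsum]
  rw [integral_finsetSum _ fun i _ ↦ integrable_clm_smul_fderiv_apply hh hc (l i) (b i)]
  simp [integral_clm_smul_fderiv_apply hh hc, hl, ← Nat.cast_smul_eq_nsmul ℝ]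

end IntegrationByParts

section Hardy

variable {E : Type*} [NormedAddCommGroup E] [InnerProductSpace ℝ E] {u : E → ℝ} {ε : ℝ}

theorem contDiff_sq_mul_inv_add_norm_sq {n : WithTop ℕ∞} (hε : 0 < ε) (hu : ContDiff ℝ n u) :
    ContDiff ℝ n fun x ↦ u x ^ 2 * (ε + ‖x‖ ^ 2)⁻¹ :=
  (hu.pow 2).mul <| (contDiff_const.add (contDiff_norm_sq ℝ)).inv fun x ↦ by positivity

theorem fderiv_sq_mul_inv_add_norm_sq_apply_self {x : E} (hε : 0 < ε)
    (hu : DifferentiableAt ℝ u x) :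
    fderiv ℝ (fun y ↦ u y ^ 2 * (ε + ‖y‖ ^ 2)⁻¹) x x =
      2 * u x * (ε + ‖x‖ ^ 2)⁻¹ * fderiv ℝ u x x
        - 2 * (u x * (ε + ‖x‖ ^ 2)⁻¹ * ‖x‖) ^ 2 := by
  have hden : HasFDerivAt (fun y : E ↦ ε + ‖y‖ ^ 2) (2 • innerSL ℝ x) x :=
    (hasStrictFDerivAt_norm_sq x).hasFDerivAt.const_add ε
  have hinv := (hasDerivAt_inv (by positivity : ε + ‖x‖ ^ 2 ≠ 0)).comp_hasFDerivAt x hden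
  have hprod : HasFDerivAt (fun y ↦ u y ^ 2 * (ε + ‖y‖ ^ 2)⁻¹) _ x :=
    (hu.hasFDerivAt.pow 2).mul hinv
  rw [hprod.fderiv]
  simp only [← inv_pow, neg_smul, smul_neg, Nat.add_one_sub_one, pow_one, nsmul_eq_mul,
    Nat.cast_ofNat, add_apply, neg_apply, smul_apply, coe_innerSL_apply,
    inner_self_eq_norm_sq_to_K, Real.ringHom_apply, smul_eq_mul]
  ring

theorem neg_mul_fderiv_sq_mul_inv_add_norm_sq_apply_self_le {x : E} {c : ℝ} (hc : 0 ≤ c)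
    (hε : 0 < ε) (hu : DifferentiableAt ℝ u x) :
    -(c * fderiv ℝ (fun y ↦ u y ^ 2 * (ε + ‖y‖ ^ 2)⁻¹) x x) ≤
      (c ^ 2 + 2 * c) * (u x ^ 2 * (ε + ‖x‖ ^ 2)⁻¹) + ‖fderiv ℝ u x‖ ^ 2 := by
  set w := (ε + ‖x‖ ^ 2)⁻¹ with hw
  have hw_nonneg : 0 ≤ w := by positivity
  have hweight : (u x * w * ‖x‖) ^ 2 ≤ u x ^ 2 * w := by
    have : w * ‖x‖ ^ 2 ≤ 1 := by
      rw [hw, inv_mul_le_one₀ (by positivity)]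
      exact le_add_of_nonneg_left hε.le
    calc (u x * w * ‖x‖) ^ 2 = u x ^ 2 * w * (w * ‖x‖ ^ 2) := by ring
      _ ≤ u x ^ 2 * w := mul_le_of_le_one_right (mul_nonneg (sq_nonneg _) hw_nonneg) this
  have hradial : |fderiv ℝ u x x| ≤ ‖fderiv ℝ u x‖ * ‖x‖ := (fderiv ℝ u x).le_opNorm x
  have hcross : -(u x * w * fderiv ℝ u x x) ≤ |u x * w * ‖x‖| * ‖fderiv ℝ u x‖ :=
    calc -(u x * w * fderiv ℝ u x x) ≤ |u x * w| * |fderiv ℝ u x x| := by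
          rw [← abs_mul]; exact neg_le_abs _
      _ ≤ |u x * w| * (‖fderiv ℝ u x‖ * ‖x‖) := by gcongr
      _ = |u x * w * ‖x‖| * ‖fderiv ℝ u x‖ := by rw [abs_mul _ ‖x‖, abs_norm]; ring
  rw [fderiv_sq_mul_inv_add_norm_sq_apply_self hε hu, ← hw]
  calc -(c * (2 * u x * w * fderiv ℝ u x x - 2 * (u x * w * ‖x‖) ^ 2))
      = 2 * c * -(u x * w * fderiv ℝ u x x) + 2 * c * (u x * w * ‖x‖) ^ 2 := by ring
    _ ≤ 2 * c * (|u x * w * ‖x‖| * ‖fderiv ℝ u x‖) + 2 * c * (u x * w * ‖x‖) ^ 2 := by gcongr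
    _ ≤ c ^ 2 * |u x * w * ‖x‖| ^ 2 + ‖fderiv ℝ u x‖ ^ 2 + 2 * c * (u x * w * ‖x‖) ^ 2 := by
        linarith [two_mul_le_add_sq (c * |u x * w * ‖x‖|) ‖fderiv ℝ u x‖]
    _ = (c ^ 2 + 2 * c) * (u x * w * ‖x‖) ^ 2 + ‖fderiv ℝ u x‖ ^ 2 := by rw [sq_abs]; ring
    _ ≤ (c ^ 2 + 2 * c) * (u x ^ 2 * w) + ‖fderiv ℝ u x‖ ^ 2 := by gcongr

variable [MeasurableSpace E] [BorelSpace E] {μ : Measure E}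

theorem integrable_sq_mul_inv_add_norm_sq [IsFiniteMeasureOnCompacts μ] (hε : 0 < ε)
    (hu : ContDiff ℝ 1 u) (hc : HasCompactSupport u) :
    Integrable (fun x ↦ u x ^ 2 * (ε + ‖x‖ ^ 2)⁻¹) μ :=
  (contDiff_sq_mul_inv_add_norm_sq hε hu).continuous.integrable_of_hasCompactSupport
    (hasCompactSupport_pow hc two_ne_zero).mul_right

variable [FiniteDimensional ℝ E] [μ.IsAddHaarMeasure]

theorem mul_integral_sq_mul_inv_add_norm_sq_le (hdim : 2 ≤ finrank ℝ E) (hε : 0 < ε)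
    (hu : ContDiff ℝ 1 u) (hc : HasCompactSupport u) :
    (((finrank ℝ E : ℝ) - 2) / 2) ^ 2 * ∫ x, u x ^ 2 * (ε + ‖x‖ ^ 2)⁻¹ ∂μ ≤
      ∫ x, ‖fderiv ℝ u x‖ ^ 2 ∂μ := by
  set c : ℝ := ((finrank ℝ E : ℝ) - 2) / 2 with hc_def
  have hc_nonneg : 0 ≤ c := by
    have : (2 : ℝ) ≤ finrank ℝ E := mod_cast hdim
    linarith
  set h : E → ℝ := fun x ↦ u x ^ 2 * (ε + ‖x‖ ^ 2)⁻¹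
  have hh : ContDiff ℝ 1 h := contDiff_sq_mul_inv_add_norm_sq hε hu
  have hint : Integrable h μ := integrable_sq_mul_inv_add_norm_sq hε hu hc
  have hgrad : Integrable (fun x ↦ ‖fderiv ℝ u x‖ ^ 2) μ := integrable_norm_fderiv_sq hu hc
  have hh_supp : HasCompactSupport h := (hasCompactSupport_pow hc two_ne_zero).mul_right
  have heuler : ∫ x, fderiv ℝ h x x ∂μ = -(finrank ℝ E * ∫ x, h x ∂μ) :=
    integral_fderiv_apply_self hh hh_supp
  have hmono : ∫ x, -(c * fderiv ℝ h x x) ∂μ ≤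
      ∫ x, (c ^ 2 + 2 * c) * h x + ‖fderiv ℝ u x‖ ^ 2 ∂μ :=
    integral_mono ((integrable_fderiv_apply_self hh hh_supp).const_mul c).neg
      ((hint.const_mul _).add hgrad) fun x ↦
        neg_mul_fderiv_sq_mul_inv_add_norm_sq_apply_self_le hc_nonneg hε
          (hu.differentiable one_ne_zero x)
  rw [integral_neg, integral_const_mul, heuler,
    integral_add (hint.const_mul _) hgrad, integral_const_mul] at hmono
  have hdim_eq : (finrank ℝ E : ℝ) = 2 * c + 2 := by rw [hc_def]; ring
  rw [hdim_eq] at hmono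
  linarith

/-- **Hardy's inequality**; the constant is sharp. -/
theorem integrable_and_mul_integral_sq_mul_inv_norm_sq_le (hdim : 2 < finrank ℝ E)
    (hu : ContDiff ℝ 1 u) (hc : HasCompactSupport u) :
    Integrable (fun x ↦ u x ^ 2 * (‖x‖ ^ 2)⁻¹) μ ∧
      (((finrank ℝ E : ℝ) - 2) / 2) ^ 2 * ∫ x, u x ^ 2 * (‖x‖ ^ 2)⁻¹ ∂μ ≤
        ∫ x, ‖fderiv ℝ u x‖ ^ 2 ∂μ := by
  have : Nontrivial E := Module.nontrivial_of_finrank_pos (R := ℝ) (by lia)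
  have hconst : 0 < (((finrank ℝ E : ℝ) - 2) / 2) ^ 2 := by
    have : (2 : ℝ) < finrank ℝ E := mod_cast hdim
    exact pow_pos (by linarith) 2
  have hε (n : ℕ) : 0 < 1 / ((n : ℝ) + 1) := Nat.one_div_pos_of_nat
  have hlim : ∀ᵐ x ∂μ, Tendsto (fun n : ℕ ↦ u x ^ 2 * (1 / ((n : ℝ) + 1) + ‖x‖ ^ 2)⁻¹) atTop
      (𝓝 (u x ^ 2 * (‖x‖ ^ 2)⁻¹)) := by
    filter_upwards [Measure.ae_ne μ 0] with x hx
    have hadd := tendsto_one_div_add_atTop_nhds_zero_nat (𝕜 := ℝ).add_const (‖x‖ ^ 2)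
    rw [zero_add] at hadd
    exact (hadd.inv₀ (by positivity)).const_mul _
  rw [← le_div_iff₀' hconst]
  exact integrable_and_integral_le_of_tendsto_of_integral_le
    (fun n ↦ integrable_sq_mul_inv_add_norm_sq (hε n) hu hc)
    (fun n x ↦ by have := hε n; positivity) hlim fun n ↦
      (le_div_iff₀' hconst).2 (mul_integral_sq_mul_inv_add_norm_sq_le hdim.le (hε n) hu hc)

end Hardy

section DirichletEnergies

variable {E : Type*} [NormedAddCommGroup E] [InnerProductSpace ℝ E] [FiniteDimensional ℝ E]
  [MeasurableSpace E] {μ : Measure E} {V : E → ℝ} {Ω : Set E}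

/-- The Dirichlet energies `∫ |∇u|²` of the test functions `u` supported in `Ω` and normalized by
`∫ V u² = 1`. Their infimum is the principal eigenvalue of the weight `V` on `Ω`, so `lam1` is the
case of a ball centred at the origin. -/
def dirichletEnergies (μ : Measure E) (V : E → ℝ) (Ω : Set E) : Set ℝ :=
  { t : ℝ | ∃ u : E → ℝ, ContDiff ℝ (⊤ : ℕ∞) u ∧ HasCompactSupport u ∧ tsupport u ⊆ Ω ∧
    (∫ x, V x * u x ^ 2 ∂μ) = 1 ∧ t = ∫ x, ‖gradient u x‖ ^ 2 ∂μ }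

theorem dirichletEnergies_mono : Monotone (dirichletEnergies μ V) := by
  rintro Ω Ω' hΩ t ⟨u, hu, hc, hsupp, ht⟩
  exact ⟨u, hu, hc, hsupp.trans hΩ, ht⟩

theorem dirichletEnergies_nonempty [BorelSpace E] [IsFiniteMeasureOnCompacts μ]
    [μ.IsOpenPosMeasure] (hΩ : IsOpen Ω) (hV : Continuous V) {x₀ : E} (hx₀ : x₀ ∈ Ω)
    (hVx₀ : 0 < V x₀) : (dirichletEnergies μ V Ω).Nonempty := by
  have hU : Ω ∩ {x | 0 < V x} ∈ 𝓝 x₀ :=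
    (hΩ.inter (isOpen_lt continuous_const hV)).mem_nhds ⟨hx₀, hVx₀⟩
  obtain ⟨f, hf_supp, hf_comp, hf, -, hfx₀⟩ := exists_contDiff_tsupport_subset (n := ⊤) hU
  have hf_nonneg : 0 ≤ fun x ↦ V x * f x ^ 2 := fun x ↦ by
    by_cases hx : x ∈ tsupport f
    · exact mul_nonneg (hf_supp hx).2.le (sq_nonneg _)
    · simp [image_eq_zero_of_notMem_tsupport hx]
  have hmass : 0 < ∫ x, V x * f x ^ 2 ∂μ :=
    (hV.mul (hf.continuous.pow 2)).integral_pos_of_hasCompactSupport_nonneg_nonzero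
      (hasCompactSupport_pow hf_comp two_ne_zero).mul_left hf_nonneg (x := x₀)
      (by simp [hfx₀, hVx₀.ne'])
  set s := ∫ x, V x * f x ^ 2 ∂μ
  refine ⟨_, fun x ↦ (√s)⁻¹ * f x, contDiff_const.mul hf, hf_comp.mul_left,
    (tsupport_mul_subset_right.trans hf_supp).trans inter_subset_left, ?_, rfl⟩
  calc ∫ x, V x * ((√s)⁻¹ * f x) ^ 2 ∂μ = ∫ x, s⁻¹ * (V x * f x ^ 2) ∂μ := by
        congr with x
        rw [mul_pow, inv_pow, Real.sq_sqrt hmass.le]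
        ring
    _ = 1 := by rw [integral_const_mul, inv_mul_cancel₀ hmass.ne']

theorem div_le_of_mem_dirichletEnergies [BorelSpace E] [μ.IsAddHaarMeasure]
    (hdim : 2 < finrank ℝ E) {A t : ℝ} (hA : 0 < A) (hV : ∀ x ≠ 0, V x ≤ A * (‖x‖ ^ 2)⁻¹)
    (ht : t ∈ dirichletEnergies μ V Ω) : (((finrank ℝ E : ℝ) - 2) / 2) ^ 2 / A ≤ t := by
  obtain ⟨u, hu, hc, -, hnorm, rfl⟩ := ht
  have : Nontrivial E := Module.nontrivial_of_finrank_pos (R := ℝ) (by lia)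
  obtain ⟨hint, hhardy⟩ := integrable_and_mul_integral_sq_mul_inv_norm_sq_le (μ := μ) hdim
    (hu.of_le (by simp)) hc
  have hVu : Integrable (fun x ↦ V x * u x ^ 2) μ :=
    .of_integral_ne_zero (hnorm ▸ one_ne_zero)
  have hmass : 1 ≤ A * ∫ x, u x ^ 2 * (‖x‖ ^ 2)⁻¹ ∂μ := by
    rw [← hnorm, ← integral_const_mul]
    refine integral_mono_ae hVu (hint.const_mul A) ?_
    filter_upwards [Measure.ae_ne μ 0] with x hx
    calc V x * u x ^ 2 ≤ A * (‖x‖ ^ 2)⁻¹ * u x ^ 2 := by gcongr; exact hV x hx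
      _ = A * (u x ^ 2 * (‖x‖ ^ 2)⁻¹) := by ring
  rw [div_le_iff₀' hA]
  calc (((finrank ℝ E : ℝ) - 2) / 2) ^ 2
      ≤ (((finrank ℝ E : ℝ) - 2) / 2) ^ 2 * (A * ∫ x, u x ^ 2 * (‖x‖ ^ 2)⁻¹ ∂μ) :=
        le_mul_of_one_le_right (sq_nonneg _) hmass
    _ = A * ((((finrank ℝ E : ℝ) - 2) / 2) ^ 2 * ∫ x, u x ^ 2 * (‖x‖ ^ 2)⁻¹ ∂μ) := by ring
    _ ≤ A * ∫ x, ‖gradient u x‖ ^ 2 ∂μ := by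
        simp only [gradient, LinearIsometryEquiv.norm_map]
        gcongr

end DirichletEnergies

theorem le_limUnder_atTop_of_antitoneOn {ι α : Type*} [SemilatticeSup ι]
    [ConditionallyCompleteLinearOrder α] [Nonempty α] [TopologicalSpace α] [OrderTopology α]
    {f : ι → α} {i₀ : ι} {b : α} (hf : AntitoneOn f (Ici i₀)) (hb : ∀ i ≥ i₀, b ≤ f i) :
    b ≤ limUnder atTop f := by
  have : Nonempty ι := ⟨i₀⟩
  have hanti : Antitone fun i ↦ f (i ⊔ i₀) := fun i j hij ↦
    hf le_sup_right le_sup_right (sup_le_sup_right hij i₀)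
  have hlb (i : ι) : b ≤ f (i ⊔ i₀) := hb _ le_sup_right
  have hlim : Tendsto f atTop (𝓝 (⨅ i, f (i ⊔ i₀))) := by
    refine (tendsto_atTop_ciInf hanti ⟨b, forall_mem_range.2 hlb⟩).congr' ?_
    filter_upwards [eventually_ge_atTop i₀] with i hi
    rw [sup_eq_left.2 hi]
  rw [hlim.limUnder_eq]
  exact le_ciInf hlb

theorem lam1_eq_sInf_dirichletEnergies (N : ℕ) (V : Euc N → ℝ) (R : ℝ) :
    lam1 N V R = sInf (dirichletEnergies volume V (ball 0 R)) :=
  rfl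

theorem le_Lam {N : ℕ} {V : Euc N → ℝ} {R₀ b : ℝ}
    (hne : (dirichletEnergies volume V (ball 0 R₀)).Nonempty)
    (hb : ∀ t ∈ dirichletEnergies volume V univ, b ≤ t) : b ≤ Lam N V := by
  have hlb (R : ℝ) : b ∈ lowerBounds (dirichletEnergies volume V (ball 0 R)) := fun t ht ↦
    hb t (dirichletEnergies_mono (subset_univ _) ht)
  have hmono {R R' : ℝ} (hR : R ≤ R') :
      dirichletEnergies volume V (ball 0 R) ⊆ dirichletEnergies volume V (ball 0 R') :=
    dirichletEnergies_mono (ball_subset_ball hR)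
  refine le_limUnder_atTop_of_antitoneOn (i₀ := R₀) ?_ ?_
  · intro R hR R' _ hRR'
    simp only [lam1_eq_sInf_dirichletEnergies]
    exact csInf_le_csInf ⟨b, hlb R'⟩ (hne.mono (hmono hR)) (hmono hRR')
  · intro R hR
    rw [lam1_eq_sInf_dirichletEnergies]
    exact le_csInf (hne.mono (hmono hR)) (hlb R)

theorem CondVDecay.exists_le_mul_inv_norm_sq {N : ℕ} {V : Euc N → ℝ} {M : ℝ}
    (hdec : CondVDecay N V) (hM : ∀ x, V x ≤ M) :
    ∃ A, ∀ x ≠ 0, V x ≤ A * (‖x‖ ^ 2)⁻¹ := by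
  obtain ⟨A, α, hA, hα, hdec⟩ := hdec
  refine ⟨max A M, fun x hx ↦ ?_⟩
  have hx_pos : 0 < ‖x‖ := norm_pos_iff.2 hx
  rcases le_total ‖x‖ 1 with hx_le | hx_ge
  · have : 1 ≤ (‖x‖ ^ 2)⁻¹ := (one_le_inv₀ (by positivity)).2 (pow_le_one₀ hx_pos.le hx_le)
    calc V x ≤ max A M := (hM x).trans (le_max_right _ _)
      _ ≤ max A M * (‖x‖ ^ 2)⁻¹ := le_mul_of_one_le_right (hA.le.trans (le_max_left _ _)) this
  · calc V x ≤ A * ‖x‖ ^ (-2 - α) := (le_max_left _ _).trans (hdec x hx)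
      _ ≤ max A M * ‖x‖ ^ (-2 : ℝ) := by gcongr; exacts [le_max_left _ _, by linarith]
      _ = max A M * (‖x‖ ^ 2)⁻¹ := by rw [Real.rpow_neg hx_pos.le, Real.rpow_two]

theorem stmt0_general (N : ℕ) (hN : 3 ≤ N) (V : Euc N → ℝ) (hV : Continuous V)
    (hpos : ∃ x, 0 < V x) (hdec : ∃ A, ∀ x ≠ 0, V x ≤ A * (‖x‖ ^ 2)⁻¹) :
    0 < Lam N V := by
  obtain ⟨x₀, hx₀⟩ := hpos
  obtain ⟨A, hA, hVA⟩ : ∃ A > 0, ∀ x ≠ 0, V x ≤ A * (‖x‖ ^ 2)⁻¹ := by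
    obtain ⟨A, hVA⟩ := hdec
    refine ⟨max A 1, by positivity, fun x hx ↦ (hVA x hx).trans ?_⟩
    gcongr
    exact le_max_left _ _
  have hdim : 2 < finrank ℝ (Euc N) := by rw [finrank_euclideanSpace_fin]; exact hN
  have hconst : 0 < (((finrank ℝ (Euc N) : ℝ) - 2) / 2) ^ 2 / A := by
    have : (2 : ℝ) < finrank ℝ (Euc N) := mod_cast hdim
    exact div_pos (pow_pos (by linarith) 2) hA
  have hne : (dirichletEnergies volume V (ball 0 (‖x₀‖ + 1))).Nonempty :=
    dirichletEnergies_nonempty isOpen_ball hV (by simp) hx₀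
  exact hconst.trans_le (le_Lam hne fun t ↦ div_le_of_mem_dirichletEnergies hdim hA hVA)

/-- under condition (V), the decay condition, and
`|x|^{2(N-1)/N} V₂(x) → 0` as `x → 0`, the limit `Λ` is strictly positive. -/
theorem stmt0 (N : ℕ) (hN : 3 ≤ N) (V V₁ V₂ : Euc N → ℝ)
    (hV : CondV N V V₁ V₂) (hdec : CondVDecay N V)
    (hV2zero : Tendsto (fun x : Euc N => ‖x‖ ^ (2 * ((N : ℝ) - 1) / N) * V₂ x)
      (𝓝[≠] (0 : Euc N)) (𝓝 0)) :
    0 < Lam N V := by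
  obtain ⟨⟨_, _, hβ, -, hHolder⟩, ⟨_, hM⟩, hpos, -⟩ := hV
  exact stmt0_general N hN V (hHolder.continuous hβ) hpos
    (hdec.exists_le_mul_inv_norm_sq fun x ↦ (le_abs_self _).trans (hM x))

end
end

section
/- Let N ≥ 3, let V satisfy condition (V) and the decay condition that there exist A, α > 0 with V⁺(x) ≤ A|x|^{-2-α} for all x ∈ ℝ^N, and let f satisfy conditions (f1), (f2), (f3). Then for every λ > Λ, problem (P_λ) has at most one solution: if u and v are both solutions of (P_λ), then u = v on ℝ^N. -/
open MeasureTheory Filter Metric Set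
open scoped ENNReal NNReal Topology

noncomputable section

/-! Write the equation as `-Δu = u a(x, u)` with `a(x, s) = λ (V(x) - f(s)/s)`, which is strictly
decreasing in `s` because `λ > Λ ≥ 0`. At a maximum of a quotient `u / z` with `z > 0` one has
`z Δu ≤ u Δz`. Hence if `-Δz ≥ z a(x, s)` and `0 < s ≤ z` there, then `u ≤ z` at that point, since
`u > z` would give `a(x, u) < a(x, s)`.

Let `v` be another solution. Since `N ≥ 3` and `V⁺` decays faster than `|x|⁻²`, the function
`h = 1 + (1 + |x|²)^q` with `q < 0` close to `0` satisfies `-Δh ≥ λ V h` outside a compact set `K`.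
Applying the above to `z = c v + ε h` and letting `ε → 0` shows that any bound `u ≤ c v` on `K`
with `c ≥ 1` holds everywhere. So either `u ≤ v`, or the maximum of `u / v` over `K` is a global
one, at a point where `u > v`; the choice `z = v` rules out the latter. By symmetry `u = v`.
-/

open InnerProductSpace
open scoped Laplacian

section Monotone

variable {ι α : Type*} [Preorder ι] [IsDirectedOrder ι] [Nonempty ι]
  [ConditionallyCompleteLinearOrder α] [TopologicalSpace α] [OrderTopology α]

lemma tendsto_sInf_atTop_sInf_iUnion {S : ι → Set α} (hS : Monotone S)
    (hb : BddBelow (⋃ i, S i)) :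
    Tendsto (fun i => sInf (S i)) atTop (𝓝 (sInf (⋃ i, S i))) := by
  rcases (⋃ i, S i).eq_empty_or_nonempty with hempty | ⟨t₀, ht₀⟩
  · simp only [iUnion_eq_empty] at hempty
    simp [hempty]
  obtain ⟨i₀, hi₀⟩ := mem_iUnion.1 ht₀
  refine tendsto_order.2 ⟨fun b hb' => ?_, fun b hb' => ?_⟩
  · filter_upwards [eventually_ge_atTop i₀] with i hi
    exact hb'.trans_le (csInf_le_csInf hb ⟨t₀, hS hi hi₀⟩ (subset_iUnion S i))
  · obtain ⟨t, ht, htb⟩ := exists_lt_of_csInf_lt ⟨t₀, ht₀⟩ hb'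
    obtain ⟨j, hj⟩ := mem_iUnion.1 ht
    filter_upwards [eventually_ge_atTop j] with i hi
    exact (csInf_le (hb.mono (subset_iUnion S i)) (hS hi hj)).trans_lt htb

end Monotone

lemma eventually_mul_rpow_le_mul_rpow {p q κ : ℝ} (A : ℝ) (hpq : p < q) (hκ : 0 < κ) :
    ∀ᶠ r : ℝ in atTop, A * r ^ p ≤ κ * r ^ q := by
  have hlim : Tendsto (fun r : ℝ => A * r ^ (-(q - p))) atTop (𝓝 0) := by
    simpa using (tendsto_rpow_neg_atTop (sub_pos.2 hpq)).const_mul A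
  filter_upwards [hlim.eventually_le_const hκ, eventually_gt_atTop 0] with r hr hr0
  calc A * r ^ p = A * r ^ (-(q - p)) * r ^ q := by
        rw [mul_assoc, ← Real.rpow_add hr0]; ring_nf
    _ ≤ κ * r ^ q := by gcongr

lemma eventually_mul_rpow_le_mul_one_add_sq_rpow {p q κ : ℝ} (A : ℝ) (hpq : p < 2 * q)
    (hq : q ≤ 0) (hκ : 0 < κ) : ∀ᶠ r : ℝ in atTop, A * r ^ p ≤ κ * (1 + r ^ 2) ^ q := by
  filter_upwards [eventually_mul_rpow_le_mul_rpow A hpq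
    (mul_pos hκ (Real.rpow_pos_of_pos two_pos q)), eventually_ge_atTop 1] with r hr hr1
  calc A * r ^ p ≤ κ * 2 ^ q * r ^ (2 * q) := hr
    _ = κ * (2 * r ^ 2) ^ q := by
        rw [Real.mul_rpow two_pos.le (by positivity), ← Real.rpow_natCast_mul (by linarith),
          mul_assoc, Nat.cast_two]
    _ ≤ κ * (1 + r ^ 2) ^ q := mul_le_mul_of_nonneg_left
        (Real.rpow_le_rpow_of_nonpos (by positivity) (by nlinarith) hq) hκ.le

lemma deriv_deriv_nonpos_of_isLocalMax {g : ℝ → ℝ} {a : ℝ} (hc : ContinuousAt g a)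
    (hmax : IsLocalMax g a) : deriv (deriv g) a ≤ 0 := by
  by_contra! hpos
  have hmin : IsLocalMin g a := isLocalMin_of_deriv_deriv_pos hpos hmax.deriv_eq_zero hc
  have hconst : g =ᶠ[𝓝 a] fun _ => g a := by
    filter_upwards [hmax, hmin] with s h h' using le_antisymm h h'
  simp [hconst.deriv.deriv_eq] at hpos

section Laplacian

variable {E : Type*} [NormedAddCommGroup E]

section NormedSpace

variable [NormedSpace ℝ E] {u : E → ℝ} {x : E}

lemma iteratedFDeriv_two_apply_self (hu : ContDiffAt ℝ 2 u x) (e : E) :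
    iteratedFDeriv ℝ 2 u x ![e, e] = fderiv ℝ (fun y => fderiv ℝ u y e) x e := by
  have hfderiv : DifferentiableAt ℝ (fderiv ℝ u) x :=
    (hu.fderiv_right (m := 1) (by norm_num)).differentiableAt (by simp)
  simp [iteratedFDeriv_two_apply, fderiv_clm_apply hfderiv (differentiableAt_const e)]

lemma deriv_deriv_comp_add_smul (hu : ContDiffAt ℝ 2 u x) (e : E) :
    deriv (deriv fun s : ℝ => u (x + s • e)) 0 = fderiv ℝ (fun y => fderiv ℝ u y e) x e := by
  have hline (s : ℝ) : HasDerivAt (fun s : ℝ => x + s • e) e s := by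
    simpa using ((hasDerivAt_id s).smul_const e).const_add x
  have hline_tendsto : Tendsto (fun s : ℝ => x + s • e) (𝓝 0) (𝓝 x) := by
    simpa using (hline 0).continuousAt.tendsto
  have hderiv : deriv (fun s : ℝ => u (x + s • e)) =ᶠ[𝓝 0] fun s => fderiv ℝ u (x + s • e) e := by
    filter_upwards [hline_tendsto.eventually (hu.eventually (by simp))] with s hs
    exact ((hs.differentiableAt (by simp)).hasFDerivAt.comp_hasDerivAt s (hline s)).deriv
  have hfderiv : DifferentiableAt ℝ (fun y => fderiv ℝ u y e) x :=
    ((hu.fderiv_right (m := 1) (by norm_num)).differentiableAt (by simp)).clm_apply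
      (differentiableAt_const e)
  rw [hderiv.deriv_eq]
  exact (hfderiv.hasFDerivAt.comp_hasDerivAt_of_eq 0 (hline 0) (by simp)).deriv

end NormedSpace

variable [InnerProductSpace ℝ E] [FiniteDimensional ℝ E] {u z : E → ℝ} {x : E}

lemma laplacian_nonpos_of_isLocalMax (hu : ContDiffAt ℝ 2 u x) (hmax : IsLocalMax u x) :
    Δ u x ≤ 0 := by
  rw [laplacian_eq_iteratedFDeriv_stdOrthonormalBasis]
  refine Finset.sum_nonpos fun i _ => ?_
  rw [iteratedFDeriv_two_apply_self hu, ← deriv_deriv_comp_add_smul hu]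
  set line : ℝ → E := fun s => x + s • stdOrthonormalBasis ℝ E i
  have hline : ContinuousAt line 0 := by fun_prop
  have hline_zero : line 0 = x := by simp [line]
  rw [← hline_zero] at hu hmax
  exact deriv_deriv_nonpos_of_isLocalMax (hu.continuousAt.comp hline) (hmax.comp_continuous hline)

lemma laplacian_mul_le_mul_laplacian_of_isLocalMax_div (hu : ContDiffAt ℝ 2 u x)
    (hz : ContDiffAt ℝ 2 z x) (hzx : 0 < z x) (hmax : IsLocalMax (fun y => u y / z y) x) :
    Δ u x * z x ≤ u x * Δ z x := by
  set t := u x / z x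
  have hux : u x = t * z x := (div_mul_cancel₀ _ hzx.ne').symm
  have htz : ContDiffAt ℝ 2 (t • z) x := hz.const_smul t
  have hmax' : IsLocalMax (u - t • z) x := by
    filter_upwards [hmax, hz.continuousAt.eventually (lt_mem_nhds hzx)] with y hy hzy
    have huy : u y ≤ t * z y := (div_le_iff₀ hzy).1 hy
    simp only [Pi.sub_apply, Pi.smul_apply, smul_eq_mul, hux]
    linarith
  have hle : Δ u x - t * Δ z x ≤ 0 := by
    rw [← smul_eq_mul t, ← laplacian_smul t hz, ← hu.laplacian_sub htz]
    exact laplacian_nonpos_of_isLocalMax (hu.sub htz) hmax'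
  rw [hux]
  nlinarith

lemma le_of_isLocalMax_div {a : ℝ → ℝ} {s : ℝ} (ha : StrictAntiOn a (Ioi 0))
    (hu : ContDiffAt ℝ 2 u x) (hz : ContDiffAt ℝ 2 z x) (hs : 0 < s) (hsz : s ≤ z x)
    (hsub : -Δ u x ≤ u x * a (u x)) (hsuper : z x * a s ≤ -Δ z x)
    (hmax : IsLocalMax (fun y => u y / z y) x) : u x ≤ z x := by
  by_contra! hzu
  have hzx : 0 < z x := hs.trans_le hsz
  have hux : 0 < u x := hzx.trans hzu
  have hlt : a (u x) < a s := ha hs hux (hsz.trans_lt hzu)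
  have hdiv := laplacian_mul_le_mul_laplacian_of_isLocalMax_div hu hz hzx hmax
  refine lt_irrefl (z x * -Δ u x) ?_
  calc z x * -Δ u x ≤ z x * (u x * a (u x)) := by gcongr
    _ < z x * (u x * a s) := by gcongr
    _ = u x * (z x * a s) := by ring
    _ ≤ u x * -Δ z x := by gcongr
    _ ≤ z x * -Δ u x := by linarith

lemma laplacian_comp_norm_sq {φ φ' : ℝ → ℝ} {φ'' : ℝ}
    (hφ : ∀ᶠ t in 𝓝 (‖x‖ ^ 2), HasDerivAt φ (φ' t) t) (hφ' : HasDerivAt φ' φ'' (‖x‖ ^ 2)) :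
    (Δ fun y : E => φ (‖y‖ ^ 2)) x
      = 2 * Module.finrank ℝ E * φ' (‖x‖ ^ 2) + 4 * ‖x‖ ^ 2 * φ'' := by
  let innerL : E →L[ℝ] E →L[ℝ] ℝ := innerSL ℝ
  have hinnerL (y e : E) : innerL y e = inner ℝ y e := rfl
  have hnorm (y : E) : HasFDerivAt (fun y : E => ‖y‖ ^ 2) (2 • innerL y) y :=
    (hasStrictFDerivAt_norm_sq y).hasFDerivAt
  have hfderiv : fderiv ℝ (fun y : E => φ (‖y‖ ^ 2)) =ᶠ[𝓝 x]
      fun y => (2 * φ' (‖y‖ ^ 2)) • innerL y := by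
    filter_upwards [(hnorm x).continuousAt.eventually hφ] with y hy
    refine (hy.comp_hasFDerivAt y (hnorm y)).fderiv.trans ?_
    module
  have hsecond (e : E) : iteratedFDeriv ℝ 2 (fun y : E => φ (‖y‖ ^ 2)) x ![e, e]
      = 2 * φ' (‖x‖ ^ 2) * ‖e‖ ^ 2 + 4 * φ'' * inner ℝ x e ^ 2 := by
    have hderiv := ((hφ'.comp_hasFDerivAt x (hnorm x)).const_mul 2).smul innerL.hasFDerivAt
    rw [iteratedFDeriv_two_apply, (hderiv.congr_of_eventuallyEq hfderiv).fderiv]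
    simp only [Function.comp_apply, Fin.isValue, Matrix.cons_val_zero, Matrix.cons_val_one,
      Matrix.cons_val_fin_one, add_apply, smul_apply, ContinuousLinearMap.smulRight_apply, hinnerL,
      real_inner_self_eq_norm_sq, nsmul_eq_mul, Nat.cast_ofNat, smul_eq_mul]
    ring
  rw [laplacian_eq_iteratedFDeriv_stdOrthonormalBasis]
  simp only [hsecond, Finset.sum_add_distrib, ← Finset.mul_sum,
    OrthonormalBasis.sum_sq_inner_left, OrthonormalBasis.norm_eq_one, one_pow, Finset.sum_const,
    Finset.card_univ, Fintype.card_fin, nsmul_eq_mul, mul_one]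
  ring

lemma le_neg_laplacian_one_add_norm_sq_rpow {q : ℝ} (hq : q ≤ 0) (x : E) :
    -2 * q * (Module.finrank ℝ E - 2 + 2 * q) * (1 + ‖x‖ ^ 2) ^ (q - 1)
      ≤ -Δ (fun y : E => (1 + ‖y‖ ^ 2 : ℝ) ^ q) x := by
  have hbase : 0 < 1 + ‖x‖ ^ 2 := by positivity
  have hderiv (p : ℝ) {t : ℝ} (ht : 0 < 1 + t) :
      HasDerivAt (fun t => (1 + t) ^ p) (p * (1 + t) ^ (p - 1)) t := by
    simpa using ((hasDerivAt_id t).const_add 1).rpow_const (p := p) (Or.inl ht.ne')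
  have hlap := laplacian_comp_norm_sq (x := x)
    (((continuousAt_const.add continuousAt_id).eventually (lt_mem_nhds hbase)).mono
      fun t => hderiv q)
    ((hderiv (q - 1) hbase).const_mul q)
  have hpow : (1 + ‖x‖ ^ 2) ^ (q - 1) = (1 + ‖x‖ ^ 2) * (1 + ‖x‖ ^ 2) ^ (q - 1 - 1) := by
    rw [Real.rpow_sub_one hbase.ne' (q - 1), mul_div_cancel₀ _ hbase.ne']
  have hgap : 0 ≤ -q * (1 - q) * (1 + ‖x‖ ^ 2) ^ (q - 1 - 1) :=
    mul_nonneg (mul_nonneg (by linarith) (by linarith)) (by positivity)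
  rw [hlap, id, hpow]
  linarith

end Laplacian

section Comparison

variable {E : Type*} [NormedAddCommGroup E] [InnerProductSpace ℝ E] [FiniteDimensional ℝ E]

/-- A classical subsolution of the equation `-Δ u = u a(x, u)`, where the nonlinearity is given
through its quotient `a(x, s)` by the unknown. -/
structure IsSubsolution (a : E → ℝ → ℝ) (u : E → ℝ) : Prop where
  contDiff : ContDiff ℝ 2 u
  neg_laplacian_le : ∀ x, -Δ u x ≤ u x * a x (u x)

/-- A positive classical supersolution of the equation `-Δ v = v a(x, v)`. -/
structure IsSupersolution (a : E → ℝ → ℝ) (v : E → ℝ) : Prop where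
  contDiff : ContDiff ℝ 2 v
  pos : ∀ x, 0 < v x
  le_neg_laplacian : ∀ x, v x * a x (v x) ≤ -Δ v x

/-- A barrier at infinity for the operator `-Δ - W`: a function bounded below by `1` which is a
supersolution of `-Δ h = W h` near infinity. A small multiple of it absorbs the values at infinity
of a function tending to zero there. -/
structure IsBarrierAtInfinity (W h : E → ℝ) : Prop where
  contDiff : ContDiff ℝ 2 h
  one_le : ∀ x, 1 ≤ h x
  le_neg_laplacian : ∀ᶠ x in cocompact E, W x * h x ≤ -Δ h x

variable {a : E → ℝ → ℝ} {W h u v : E → ℝ}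

lemma exists_isBarrierAtInfinity_of_le_mul_rpow {A α : ℝ} (hE : 2 < Module.finrank ℝ E)
    (hA : 0 ≤ A) (hα : 0 < α) (hW : ∀ᶠ x in cocompact E, W x ≤ A * ‖x‖ ^ (-2 - α)) :
    ∃ h : E → ℝ, IsBarrierAtInfinity W h := by
  -- The bound `-1/2 < q` keeps the factor `finrank ℝ E - 2 + 2 * q` of the Laplacian positive, and
  -- `-α/2 < q` makes `(1 + ‖x‖²)^(q - 1)` dominate `‖x‖^(-2 - α)`.
  obtain ⟨q, hq, hq0⟩ : ∃ q, max (-α / 2) (-1 / 2) < q ∧ q < 0 :=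
    exists_between (max_lt (by linarith) (by norm_num))
  obtain ⟨hqα, hq1⟩ := max_lt_iff.1 hq
  set κ : ℝ := -2 * q * (Module.finrank ℝ E - 2 + 2 * q)
  have hκ : 0 < κ := by
    have : (3 : ℝ) ≤ Module.finrank ℝ E := by exact_mod_cast hE
    exact mul_pos (by linarith) (by linarith)
  set w : E → ℝ := fun x => (1 + ‖x‖ ^ 2) ^ q
  have hw : ContDiff ℝ 2 w :=
    (contDiff_const.add (contDiff_norm_sq ℝ)).rpow_const_of_ne fun x => by positivity
  have hw_nonneg (x : E) : 0 ≤ w x := by positivity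
  have hw_le_one (x : E) : w x ≤ 1 :=
    Real.rpow_le_one_of_one_le_of_nonpos (by nlinarith [sq_nonneg ‖x‖]) hq0.le
  have hlap (x : E) : Δ (1 + w : E → ℝ) x = Δ w x :=
    ((contDiffAt_const (c := (1 : ℝ))).laplacian_add hw.contDiffAt).trans (by simp)
  refine ⟨1 + w, contDiff_const.add hw, fun x => by simpa using hw_nonneg x, ?_⟩
  filter_upwards [hW, tendsto_norm_cocompact_atTop.eventually
    (eventually_mul_rpow_le_mul_one_add_sq_rpow (p := -2 - α) (q := q - 1) (A * 2)
      (by linarith) (by linarith) hκ)] with x hWx hdecay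
  calc W x * (1 + w x) ≤ A * ‖x‖ ^ (-2 - α) * (1 + w x) :=
        mul_le_mul_of_nonneg_right hWx (by linarith [hw_nonneg x])
    _ ≤ A * ‖x‖ ^ (-2 - α) * 2 := by gcongr; linarith [hw_le_one x]
    _ = A * 2 * ‖x‖ ^ (-2 - α) := by ring
    _ ≤ κ * (1 + ‖x‖ ^ 2) ^ (q - 1) := hdecay
    _ ≤ -Δ w x := le_neg_laplacian_one_add_norm_sq_rpow hq0.le x
    _ = -Δ (1 + w : E → ℝ) x := by rw [hlap]

lemma mul_le_neg_laplacian_smul_add_smul {b c ε : ℝ} {x : E} (hv : ContDiffAt ℝ 2 v x)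
    (hh : ContDiffAt ℝ 2 h x) (hc : 0 ≤ c) (hε : 0 ≤ ε) (hvx : v x * b ≤ -Δ v x)
    (hhx : h x * b ≤ -Δ h x) : (c • v + ε • h) x * b ≤ -Δ (c • v + ε • h) x := by
  have hlap : Δ (c • v + ε • h) x = c * Δ v x + ε * Δ h x := by
    rw [← smul_eq_mul, ← smul_eq_mul, ← laplacian_smul c hv, ← laplacian_smul ε hh]
    exact (hv.const_smul c).laplacian_add (hh.const_smul ε)
  simp only [hlap, Pi.add_apply, Pi.smul_apply, smul_eq_mul]
  linarith [mul_le_mul_of_nonneg_left hvx hc, mul_le_mul_of_nonneg_left hhx hε]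

lemma IsSubsolution.le_mul_add_mul {K : Set E} {c ε : ℝ}
    (ha : ∀ x, StrictAntiOn (a x) (Ioi 0)) (haW : ∀ x s, 0 < s → a x s ≤ W x)
    (hu : IsSubsolution a u) (hu0 : Tendsto u (cocompact E) (𝓝 0)) (hv : IsSupersolution a v)
    (hh : ContDiff ℝ 2 h) (hh1 : ∀ x, 1 ≤ h x) (hhK : ∀ x ∉ K, W x * h x ≤ -Δ h x)
    (hc : 1 ≤ c) (hK : ∀ x ∈ K, u x ≤ c * v x) (hε : 0 < ε) (x : E) :
    u x ≤ c * v x + ε * h x := by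
  by_contra! hx
  set z : E → ℝ := c • v + ε • h
  have hεz (y : E) : ε ≤ ε * h y := le_mul_of_one_le_right hε.le (hh1 y)
  have hvz (y : E) : v y ≤ c * v y := le_mul_of_one_le_left (hv.pos y).le hc
  have hz_apply (y : E) : z y = c * v y + ε * h y := rfl
  have hz_pos (y : E) : 0 < z y := by linarith [hεz y, hvz y, hv.pos y, hz_apply y]
  have hz : ContDiff ℝ 2 z := (contDiff_const.smul hv.contDiff).add (contDiff_const.smul hh)
  have hquot : Continuous fun y => u y / z y :=
    hu.contDiff.continuous.div hz.continuous fun y => (hz_pos y).ne'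
  have hx_quot : 1 < u x / z x := (one_lt_div (hz_pos x)).2 hx
  have hfar : ∀ᶠ y in cocompact E, u y / z y ≤ u x / z x := by
    filter_upwards [hu0.eventually_lt_const hε] with y hy
    refine ((div_le_one (hz_pos y)).2 ?_).trans hx_quot.le
    linarith [hεz y, hvz y, hv.pos y, hz_apply y]
  obtain ⟨x₀, hmax⟩ := hquot.exists_forall_ge' x hfar
  have hzu : z x₀ < u x₀ := (one_lt_div (hz_pos x₀)).1 (hx_quot.trans_le (hmax x))
  have hx₀K : x₀ ∉ K := fun h₀ => by linarith [hK x₀ h₀, hεz x₀, hz_apply x₀]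
  have hhx₀ : h x₀ * a x₀ (v x₀) ≤ -Δ h x₀ := by
    refine le_trans ?_ (hhK x₀ hx₀K)
    rw [mul_comm]
    gcongr
    · linarith [hh1 x₀]
    · exact haW x₀ _ (hv.pos x₀)
  refine hzu.not_ge (le_of_isLocalMax_div (ha x₀) hu.contDiff.contDiffAt hz.contDiffAt (hv.pos x₀)
    ?_ (hu.neg_laplacian_le x₀) ?_ (Eventually.of_forall hmax))
  · linarith [hεz x₀, hvz x₀, hz_apply x₀]
  · exact mul_le_neg_laplacian_smul_add_smul hv.contDiff.contDiffAt hh.contDiffAt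
      (zero_le_one.trans hc) hε.le (hv.le_neg_laplacian x₀) hhx₀

theorem IsSubsolution.le_of_isBarrierAtInfinity
    (ha : ∀ x, StrictAntiOn (a x) (Ioi 0)) (haW : ∀ x s, 0 < s → a x s ≤ W x)
    (hu : IsSubsolution a u) (hu0 : Tendsto u (cocompact E) (𝓝 0)) (hv : IsSupersolution a v)
    (hh : IsBarrierAtInfinity W h) : u ≤ v := by
  obtain ⟨K, hK, hhK⟩ := mem_cocompact.1 hh.le_neg_laplacian
  have hpropagate {c : ℝ} (hc : 1 ≤ c) (huv : ∀ x ∈ K, u x ≤ c * v x) (x : E) :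
      u x ≤ c * v x := by
    have hh0 : 0 < h x := one_pos.trans_le (hh.one_le x)
    refine le_of_forall_pos_le_add fun ε hε => ?_
    simpa [hh0.ne'] using hu.le_mul_add_mul ha haW hu0 hv hh.contDiff hh.one_le
      (fun y hy => hhK hy) hc huv (div_pos hε hh0) x
  have hquot : Continuous fun x => u x / v x :=
    hu.contDiff.continuous.div hv.contDiff.continuous fun x => (hv.pos x).ne'
  obtain ⟨x₁, -, hmax⟩ := (hK.insert 0).exists_isMaxOn (insert_nonempty 0 K) hquot.continuousOn
  have huvK (x : E) (hx : x ∈ K) : u x ≤ u x₁ / v x₁ * v x :=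
    (div_le_iff₀ (hv.pos x)).1 (hmax (mem_insert_of_mem 0 hx))
  have hx₁ : u x₁ ≤ v x₁ := by
    by_contra! hlt
    have huv := hpropagate ((one_lt_div (hv.pos x₁)).2 hlt).le huvK
    exact hlt.not_ge (le_of_isLocalMax_div (ha x₁) hu.contDiff.contDiffAt hv.contDiff.contDiffAt
      (hv.pos x₁) le_rfl (hu.neg_laplacian_le x₁) (hv.le_neg_laplacian x₁)
      (Eventually.of_forall fun x => (div_le_iff₀ (hv.pos x)).2 (huv x)))
  intro x
  simpa using hpropagate le_rfl (fun y hy => (huvK y hy).trans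
    (mul_le_mul_of_nonneg_right ((div_le_one (hv.pos x₁)).2 hx₁) (hv.pos y).le)) x

end Comparison

lemma lap_eq_laplacian {N : ℕ} {u : Euc N → ℝ} {x : Euc N} (hu : ContDiffAt ℝ 2 u x) :
    lap N u x = Δ u x := by
  rw [laplacian_eq_iteratedFDeriv_orthonormalBasis u (EuclideanSpace.basisFun (Fin N) ℝ)]
  simp [lap, iteratedFDeriv_two_apply_self hu]

/-- The Dirichlet energies `∫ |∇u|²` of the test functions supported in the ball of radius `R` and
normalized by `∫ V u² = 1`; their infimum is `lam1 N V R`. -/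
def normalizedEnergies (N : ℕ) (V : Euc N → ℝ) (R : ℝ) : Set ℝ :=
  { t : ℝ | ∃ u : Euc N → ℝ, ContDiff ℝ (⊤ : ℕ∞) u ∧ HasCompactSupport u ∧
    tsupport u ⊆ ball (0 : Euc N) R ∧
    (∫ x, V x * u x ^ 2) = 1 ∧ t = ∫ x, ‖gradient u x‖ ^ 2 }

lemma normalizedEnergies_mono (N : ℕ) (V : Euc N → ℝ) : Monotone (normalizedEnergies N V) := by
  rintro R R' hR t ⟨u, hsmooth, hcompact, hsupport, hu⟩
  exact ⟨u, hsmooth, hcompact, hsupport.trans (ball_subset_ball hR), hu⟩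

lemma nonneg_of_mem_normalizedEnergies {N : ℕ} {V : Euc N → ℝ} {R t : ℝ}
    (ht : t ∈ normalizedEnergies N V R) : 0 ≤ t := by
  obtain ⟨u, -, -, -, -, rfl⟩ := ht
  positivity

lemma Lam_nonneg (N : ℕ) (V : Euc N → ℝ) : 0 ≤ Lam N V := by
  have hnonneg : ∀ t ∈ ⋃ R, normalizedEnergies N V R, 0 ≤ t := fun t ht =>
    nonneg_of_mem_normalizedEnergies (mem_iUnion.1 ht).choose_spec
  have hlim : Tendsto (lam1 N V) atTop (𝓝 (sInf (⋃ R, normalizedEnergies N V R))) :=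
    tendsto_sInf_atTop_sInf_iUnion (normalizedEnergies_mono N V) ⟨0, hnonneg⟩
  rw [Lam, hlim.limUnder_eq]
  exact Real.sInf_nonneg hnonneg

section Logistic

variable {N : ℕ} {V : Euc N → ℝ} {f : ℝ → ℝ} {lam : ℝ} {u : Euc N → ℝ}

/-- The quotient `λ (V(x) - f(s)/s)` of the logistic nonlinearity `λ (V(x) s - f(s))` by `s`. -/
def logisticRate (V : Euc N → ℝ) (f : ℝ → ℝ) (lam : ℝ) (x : Euc N) (s : ℝ) : ℝ :=
  lam * (V x - f s / s)

lemma strictAntiOn_logisticRate (hf : StrictMonoOn (fun s => f s / s) (Ioi 0)) (hlam : 0 < lam)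
    (x : Euc N) : StrictAntiOn (logisticRate V f lam x) (Ioi 0) := fun _ hs _ ht hst =>
  mul_lt_mul_of_pos_left (sub_lt_sub_left (hf hs ht hst) (V x)) hlam

lemma logisticRate_le {s : ℝ} (hs : 0 < s) (hfs : 0 ≤ f s) (hlam : 0 ≤ lam) (x : Euc N) :
    logisticRate V f lam x s ≤ lam * V x :=
  mul_le_mul_of_nonneg_left (sub_le_self _ (div_nonneg hfs hs.le)) hlam

lemma IsSolution.neg_laplacian_eq (hu : IsSolution N V f lam u) (x : Euc N) :
    -Δ u x = u x * logisticRate V f lam x (u x) := by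
  rw [← lap_eq_laplacian hu.smooth.contDiffAt, hu.eqn x, logisticRate]
  field_simp [(hu.pos x).ne']

lemma IsSolution.isSubsolution (hu : IsSolution N V f lam u) :
    IsSubsolution (logisticRate V f lam) u :=
  ⟨hu.smooth, fun x => (hu.neg_laplacian_eq x).le⟩

lemma IsSolution.isSupersolution (hu : IsSolution N V f lam u) :
    IsSupersolution (logisticRate V f lam) u :=
  ⟨hu.smooth, hu.pos, fun x => (hu.neg_laplacian_eq x).ge⟩

lemma CondVDecay.exists_isBarrierAtInfinity (hV : CondVDecay N V) (hN : 3 ≤ N) (hlam : 0 ≤ lam) :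
    ∃ h, IsBarrierAtInfinity (fun x => lam * V x) h := by
  obtain ⟨A, α, hA, hα, hVA⟩ := hV
  have hE : 2 < Module.finrank ℝ (Euc N) := by simpa using Nat.lt_of_succ_le hN
  refine exists_isBarrierAtInfinity_of_le_mul_rpow hE (mul_nonneg hlam hA.le) hα ?_
  filter_upwards [tendsto_norm_cocompact_atTop.eventually (eventually_gt_atTop 0)] with x hx
  rw [mul_assoc]
  exact mul_le_mul_of_nonneg_left ((le_max_left _ _).trans (hVA x (norm_pos_iff.1 hx))) hlam

end Logistic

theorem stmt2_general {N : ℕ} (hN : 3 ≤ N) {V : Euc N → ℝ} (hV : CondVDecay N V) {f : ℝ → ℝ}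
    (hf0 : ∀ s, 0 < s → 0 ≤ f s) (hf : StrictMonoOn (fun s => f s / s) (Ioi 0))
    {lam : ℝ} (hlam : 0 < lam) {u v : Euc N → ℝ}
    (hu : IsSolution N V f lam u) (hv : IsSolution N V f lam v) : u = v := by
  obtain ⟨h, hh⟩ := hV.exists_isBarrierAtInfinity hN hlam.le
  have hle {u v : Euc N → ℝ} (hu : IsSolution N V f lam u) (hv : IsSolution N V f lam v) : u ≤ v :=
    hu.isSubsolution.le_of_isBarrierAtInfinity (strictAntiOn_logisticRate hf hlam)
      (fun x s hs => logisticRate_le hs (hf0 s hs) hlam.le x) hu.decay hv.isSupersolution hh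
  exact le_antisymm (hle hu hv) (hle hv hu)

/-- for every `λ > Λ`, problem `(P_λ)` has at most one solution. -/
theorem stmt2 (N : ℕ) (hN : 3 ≤ N) (V V₁ V₂ : Euc N → ℝ)
    (hV : CondV N V V₁ V₂) (hdec : CondVDecay N V)
    (f : ℝ → ℝ) (hf : CondF N V f)
    (lam : ℝ) (hlam : Lam N V < lam)
    (u v : Euc N → ℝ) (hu : IsSolution N V f lam u) (hv : IsSolution N V f lam v) :
    u = v := by
  exact stmt2_general hN hdec (fun s hs => hf.2.1 s hs.le) hf.2.2.2.2.2.1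
    ((Lam_nonneg N V).trans_lt hlam) hu hv

end
end
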